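/- (Stability, AY version.) Let A and Y be random variables and V = (V_i)_{i ∈ I} a finite family of random variables such that the joint law of (A, (V_i)_{i ∈ I}) is absolutely continuous with respect to P_A ⊗ ⨂_{i ∈ I} P_{V_i} with a density that is positive almost everywhere. Suppose C ⊆ C̃ ⊆ I satisfy C = R_{Y|A}(V_{C̃}) and R_A(V_C) = C. Then also R_{Y|A}(V_C) = C; in particular, the limit C*_AY of the alternating iteration S → R_A → R_{Y|A} → R_A → ⋯ is a fixed point of both the treatment and outcome Markov boundary operations. -/

import Mathlib

/-!
Write `σ(J)` for the σ-algebra generated by `(A, V_J)`. The blanket condition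
`Y ⊥⊥ V_{K∖J} | (A, V_J)` says exactly that `P(Y ∈ s | σ(K)) = P(Y ∈ s | σ(J))` almost surely for
every Borel set `s` (`outBlanket_iff`).

In this form the contraction property is transitivity of a.e. equality: a blanket of a blanket of
`K` is a blanket of `K`. The intersection property (`outBlanket_inter`) uses positivity: if
`P(Y ∈ s | σ(K))` equals both `g₁(A, V_{J₁})` and `g₂(A, V_{J₂})`, then `g₁ = g₂` almost everywhere
for the product measure, as that measure is absolutely continuous with respect to the joint law.
By Fubini the coordinates outside `J₁` can be frozen at a suitable point `w`, which leaves `g₁`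
unchanged and turns `g₂` into a function of `(a, v_{J₁ ∩ J₂})`.

Blankets of the finite family `V_{C̃}` are therefore closed under intersection, so the boundary `C`
is itself a blanket of `C̃`. Any blanket of `C` is then a blanket of `C̃` by contraction, hence
contains `C`.
-/

open MeasureTheory ProbabilityTheory

/-- `X ⊥⊥ Y | W` under `μ`: conditional independence of the random elements `X` and `Y`
given the σ-algebra generated by the random element `W`. -/
def CondIndepGiven {Ω α β γ : Type*} [mΩ : MeasurableSpace Ω] [StandardBorelSpace Ω]
    [MeasurableSpace α] [MeasurableSpace β] [MeasurableSpace γ]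
    (μ : Measure Ω) [IsFiniteMeasure μ]
    (X : Ω → α) (Y : Ω → β) (W : Ω → γ) : Prop :=
  ∃ hle : MeasurableSpace.comap W inferInstance ≤ mΩ,
    CondIndepFun (MeasurableSpace.comap W inferInstance) hle X Y μ

/-- The subvector `(V_i)_{i ∈ J}` of a family of random variables. -/
def subvec {Ω I : Type*} (V : I → Ω → ℝ) (J : Set I) : Ω → (J → ℝ) :=
  fun ω j => V j ω

/-- The joint law of `(V_i)_{i ∈ I}` is absolutely continuous w.r.t. the product
`⨂_{i ∈ I} P_{V_i}` of its one-dimensional marginal laws, with a density that is positive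
almost everywhere. -/
def PositiveFamilyDensity {Ω I : Type*} [MeasurableSpace Ω] [Fintype I]
    (μ : Measure Ω) (V : I → Ω → ℝ) : Prop :=
  μ.map (fun ω i => V i ω) ≪ Measure.pi (fun i => μ.map (V i)) ∧
    ∀ᵐ x ∂(Measure.pi fun i => μ.map (V i)),
      0 < (μ.map (fun ω i => V i ω)).rnDeriv (Measure.pi fun i => μ.map (V i)) x

/-- The joint law of `(W, (V_i)_{i ∈ I})` is absolutely continuous w.r.t. the product
`P_W ⊗ ⨂_{i ∈ I} P_{V_i}` of its one-dimensional marginal laws, with a density that is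
positive almost everywhere. -/
def PositivePairDensity {Ω α I : Type*} [MeasurableSpace Ω] [MeasurableSpace α] [Fintype I]
    (μ : Measure Ω) (W : Ω → α) (V : I → Ω → ℝ) : Prop :=
  μ.map (fun ω => (W ω, fun i => V i ω)) ≪ (μ.map W).prod (Measure.pi fun i => μ.map (V i)) ∧
    ∀ᵐ x ∂((μ.map W).prod (Measure.pi fun i => μ.map (V i))),
      0 < (μ.map (fun ω => (W ω, fun i => V i ω))).rnDeriv
            ((μ.map W).prod (Measure.pi fun i => μ.map (V i))) x

/-- The joint law of `(W, U, (V_i)_{i ∈ I})` is absolutely continuous w.r.t. the product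
`P_W ⊗ P_U ⊗ ⨂_{i ∈ I} P_{V_i}` of its one-dimensional marginal laws, with a density that is
positive almost everywhere. -/
def PositiveTripleDensity {Ω I : Type*} [MeasurableSpace Ω] [Fintype I]
    (μ : Measure Ω) (W U : Ω → ℝ) (V : I → Ω → ℝ) : Prop :=
  μ.map (fun ω => (W ω, U ω, fun i => V i ω)) ≪
      (μ.map W).prod ((μ.map U).prod (Measure.pi fun i => μ.map (V i))) ∧
    ∀ᵐ x ∂((μ.map W).prod ((μ.map U).prod (Measure.pi fun i => μ.map (V i)))),
      0 < (μ.map (fun ω => (W ω, U ω, fun i => V i ω))).rnDeriv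
            ((μ.map W).prod ((μ.map U).prod (Measure.pi fun i => μ.map (V i)))) x

/-- `J ∈ 𝔯_A(V)`: `J` is a treatment Markov blanket of the family `V`,
i.e. `A ⊥⊥ V_{I∖J} | V_J`. -/
def IsTreatBlanket {Ω I : Type*} [MeasurableSpace Ω] [StandardBorelSpace Ω]
    (μ : Measure Ω) [IsFiniteMeasure μ] (A : Ω → ℝ) (V : I → Ω → ℝ) (J : Set I) : Prop :=
  CondIndepGiven μ A (subvec V (Set.univ \ J)) (subvec V J)

/-- `J ∈ 𝔯_{Y|A}(V)`: `J` is an outcome Markov blanket of the family `V`,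
i.e. `Y ⊥⊥ V_{I∖J} | (A, V_J)`. -/
def IsOutBlanket {Ω I : Type*} [MeasurableSpace Ω] [StandardBorelSpace Ω]
    (μ : Measure Ω) [IsFiniteMeasure μ] (A Y : Ω → ℝ) (V : I → Ω → ℝ) (J : Set I) : Prop :=
  CondIndepGiven μ Y (subvec V (Set.univ \ J)) (fun ω => (A ω, subvec V J ω))

/-- `R_A(V_J)`: the treatment Markov boundary of the subfamily `(V_i)_{i ∈ J}`, i.e. the
intersection of all `J' ⊆ J` such that `A ⊥⊥ V_{J∖J'} | V_{J'}`. -/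
def treatBoundary {Ω I : Type*} [MeasurableSpace Ω] [StandardBorelSpace Ω]
    (μ : Measure Ω) [IsFiniteMeasure μ] (A : Ω → ℝ) (V : I → Ω → ℝ) (J : Set I) : Set I :=
  ⋂₀ {J' : Set I | J' ⊆ J ∧ CondIndepGiven μ A (subvec V (J \ J')) (subvec V J')}

/-- `R_{Y|A}(V_J)`: the outcome Markov boundary of the subfamily `(V_i)_{i ∈ J}`, i.e. the
intersection of all `J' ⊆ J` such that `Y ⊥⊥ V_{J∖J'} | (A, V_{J'})`. -/
def outBoundary {Ω I : Type*} [MeasurableSpace Ω] [StandardBorelSpace Ω]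
    (μ : Measure Ω) [IsFiniteMeasure μ] (A Y : Ω → ℝ) (V : I → Ω → ℝ) (J : Set I) : Set I :=
  ⋂₀ {J' : Set I | J' ⊆ J ∧
        CondIndepGiven μ Y (subvec V (J \ J')) (fun ω => (A ω, subvec V J' ω))}

/-- `A` is a binary treatment taking values in `{0, 1}`. -/
def IsBinary {Ω : Type*} (A : Ω → ℝ) : Prop :=
  ∀ ω, A ω = 0 ∨ A ω = 1

/-- Consistency of the observed outcome `Y` with the potential outcomes `Y₀, Y₁`:
`Y = Y₁` a.s. on `{A = 1}` and `Y = Y₀` a.s. on `{A = 0}`. -/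
def Consistency {Ω : Type*} [MeasurableSpace Ω] (μ : Measure Ω) (A Y Y0 Y1 : Ω → ℝ) : Prop :=
  (∀ᵐ ω ∂μ, A ω = 1 → Y ω = Y1 ω) ∧ (∀ᵐ ω ∂μ, A ω = 0 → Y ω = Y0 ω)

/-- The random vector `C` controls for confounding: `Y_a ⊥⊥ A | C` for `a = 0, 1`. -/
def ControlsConfounding {Ω γ : Type*} [MeasurableSpace Ω] [StandardBorelSpace Ω]
    [MeasurableSpace γ] (μ : Measure Ω) [IsFiniteMeasure μ]
    (A Y0 Y1 : Ω → ℝ) (C : Ω → γ) : Prop :=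
  CondIndepGiven μ Y0 A C ∧ CondIndepGiven μ Y1 A C

/-- Conditional independence in terms of conditional probabilities: adding `Z` to the conditioning
variable `W` does not change the conditional law of `X`. -/
lemma condIndepGiven_iff {Ω β γ : Type*} [mΩ : MeasurableSpace Ω] [StandardBorelSpace Ω]
    [MeasurableSpace β] [StandardBorelSpace β] [Nonempty β] [MeasurableSpace γ]
    (μ : Measure Ω) [IsFiniteMeasure μ] {X : Ω → ℝ} {Z : Ω → β} {W : Ω → γ}
    (hX : Measurable X) (hZ : Measurable Z) (hW : Measurable W) :
    CondIndepGiven μ X Z W ↔ ∀ s, MeasurableSet s →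
      μ⟦X ⁻¹' s | MeasurableSpace.comap (fun ω => (W ω, Z ω)) inferInstance⟧ =ᵐ[μ]
        μ⟦X ⁻¹' s | MeasurableSpace.comap W inferInstance⟧ := by
  have hWZ : Measurable fun ω => (W ω, Z ω) := hW.prodMk hZ
  constructor
  · rintro ⟨hle, h⟩ s hs
    have h' := (condIndepFun_iff_condDistrib_prod_ae_eq_prodMkRight hX hZ hW).1
      (CondIndepFun.symm h)
    have h2 := ae_of_ae_map hWZ.aemeasurable h'
    refine (condDistrib_ae_eq_condExp hWZ hX hs).symm.trans
      (Filter.EventuallyEq.trans ?_ (condDistrib_ae_eq_condExp hW hX hs))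
    filter_upwards [h2] with ω hω
    rw [hω, Kernel.prodMkRight_apply]
  · intro h
    refine ⟨hW.comap_le, (condIndepFun_iff_condExp_inter_preimage_eq_mul hX hZ).2 ?_⟩
    intro s t hs ht
    have hsub : MeasurableSpace.comap W inferInstance ≤
        MeasurableSpace.comap (fun ω => (W ω, Z ω)) inferInstance := by
      rintro _ ⟨u, hu, rfl⟩
      exact ⟨Prod.fst ⁻¹' u, measurable_fst hu, rfl⟩
    have hint : ∀ u, MeasurableSet u → Integrable (u.indicator fun _ : Ω => (1 : ℝ)) μ :=
      fun u hu => (integrable_const _).indicator hu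
    have hZt : StronglyMeasurable[MeasurableSpace.comap (fun ω => (W ω, Z ω)) inferInstance]
        ((Z ⁻¹' t).indicator fun _ => (1 : ℝ)) :=
      stronglyMeasurable_const.indicator ⟨Prod.snd ⁻¹' t, measurable_snd ht, rfl⟩
    have hmul : ((X ⁻¹' s ∩ Z ⁻¹' t).indicator fun _ => (1 : ℝ)) =
        ((Z ⁻¹' t).indicator fun _ => (1 : ℝ)) * ((X ⁻¹' s).indicator fun _ => (1 : ℝ)) := by
      ext ω
      by_cases h1 : X ω ∈ s <;> by_cases h2 : Z ω ∈ t <;> simp [Set.indicator, h1, h2]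
    have hb : ∀ᵐ ω ∂μ, ‖(Z ⁻¹' t).indicator (fun _ => (1 : ℝ)) ω‖ ≤ 1 :=
      ae_of_all _ fun ω => by
        by_cases h2 : Z ω ∈ t <;> simp [Set.indicator, h2]
    have e1 := condExp_stronglyMeasurable_mul_of_bound hWZ.comap_le hZt (hint _ (hX hs)) 1 hb
    have e2 := condExp_condExp_of_le (μ := μ)
      (f := (X ⁻¹' s ∩ Z ⁻¹' t).indicator fun _ => (1 : ℝ)) hsub hWZ.comap_le
    have e3 : μ⟦X ⁻¹' s ∩ Z ⁻¹' t |
        MeasurableSpace.comap (fun ω => (W ω, Z ω)) inferInstance⟧ =ᵐ[μ]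
        ((Z ⁻¹' t).indicator fun _ => (1 : ℝ)) *
          μ⟦X ⁻¹' s | MeasurableSpace.comap W inferInstance⟧ := by
      rw [hmul]
      exact e1.trans (Filter.EventuallyEq.rfl.mul (h s hs))
    have hi : Integrable (((Z ⁻¹' t).indicator fun _ => (1 : ℝ)) *
          μ⟦X ⁻¹' s | MeasurableSpace.comap W inferInstance⟧) μ :=
      (integrable_condExp).congr e3
    have e4 := condExp_mul_of_stronglyMeasurable_right
      (m := MeasurableSpace.comap W inferInstance) (μ := μ)
      stronglyMeasurable_condExp hi (hint _ (hZ ht))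
    filter_upwards [e2, condExp_congr_ae (m := MeasurableSpace.comap W inferInstance) e3, e4]
      with ω h2 h3 h4
    rw [← h2, h3, h4, Pi.mul_apply, mul_comm]

section Blankets

variable {Ω I : Type*}

/-- The σ-algebra generated by `(A, V_J)`. -/
abbrev sig (A : Ω → ℝ) (V : I → Ω → ℝ) (J : Set I) : MeasurableSpace Ω :=
  MeasurableSpace.comap (fun ω => (A ω, subvec V J ω)) inferInstance

/-- For `J ⊆ K`, the pair `((A, V_J), V_{K∖J})` generates the same σ-algebra as `(A, V_K)`. -/
lemma sig_split (A : Ω → ℝ) (V : I → Ω → ℝ) {J K : Set I} (hJK : J ⊆ K) :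
    MeasurableSpace.comap (fun ω => ((A ω, subvec V J ω), subvec V (K \ J) ω)) inferInstance =
      sig A V K := by
  classical
  apply le_antisymm
  · rintro _ ⟨u, hu, rfl⟩
    let φ : ℝ × (K → ℝ) → (ℝ × (J → ℝ)) × ((K \ J : Set I) → ℝ) := fun p =>
      ((p.1, fun j => p.2 ⟨j, hJK j.2⟩), fun j => p.2 ⟨j, j.2.1⟩)
    have hφ : Measurable φ := by fun_prop
    exact ⟨φ ⁻¹' u, hφ hu, rfl⟩
  · rintro _ ⟨u, hu, rfl⟩
    let ψ : (ℝ × (J → ℝ)) × ((K \ J : Set I) → ℝ) → ℝ × (K → ℝ) := fun p =>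
      (p.1.1, fun k => if h : (k : I) ∈ J then p.1.2 ⟨k, h⟩ else p.2 ⟨k, k.2, h⟩)
    have hψ : Measurable ψ := by
      refine (measurable_fst.comp measurable_fst).prodMk (measurable_pi_lambda _ fun k => ?_)
      by_cases h : (k : I) ∈ J <;> simp only [h, dite_true, dite_false] <;> fun_prop
    refine ⟨ψ ⁻¹' u, hψ hu, ?_⟩
    rw [← Set.preimage_comp]
    congr 1
    ext ω
    · rfl
    · simp [ψ, subvec]

lemma sig_mono (A : Ω → ℝ) (V : I → Ω → ℝ) {J K : Set I} (hJK : J ⊆ K) :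
    sig A V J ≤ sig A V K := by
  rintro _ ⟨u, hu, rfl⟩
  let φ : ℝ × (K → ℝ) → ℝ × (J → ℝ) := fun p => (p.1, fun j => p.2 ⟨j, hJK j.2⟩)
  have hφ : Measurable φ := by fun_prop
  exact ⟨φ ⁻¹' u, hφ hu, rfl⟩

variable [MeasurableSpace Ω]

lemma measurable_subvec {V : I → Ω → ℝ} (hV : ∀ i, Measurable (V i)) (J : Set I) :
    Measurable (subvec V J) :=
  measurable_pi_lambda _ fun j => hV j

lemma measurable_pair {A : Ω → ℝ} {V : I → Ω → ℝ} (hA : Measurable A)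
    (hV : ∀ i, Measurable (V i)) (J : Set I) : Measurable fun ω => (A ω, subvec V J ω) :=
  hA.prodMk (measurable_subvec hV J)

variable [StandardBorelSpace Ω]

/-- `J` is an outcome blanket of `V_K` iff the conditional law of `Y` given `(A, V_K)` is already
its conditional law given `(A, V_J)`. -/
lemma outBlanket_iff [Fintype I] (μ : Measure Ω) [IsFiniteMeasure μ]
    {A Y : Ω → ℝ} {V : I → Ω → ℝ}
    (hA : Measurable A) (hY : Measurable Y) (hV : ∀ i, Measurable (V i))
    {J K : Set I} (hJK : J ⊆ K) :
    CondIndepGiven μ Y (subvec V (K \ J)) (fun ω => (A ω, subvec V J ω)) ↔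
      ∀ s, MeasurableSet s → μ⟦Y ⁻¹' s | sig A V K⟧ =ᵐ[μ] μ⟦Y ⁻¹' s | sig A V J⟧ := by
  rw [condIndepGiven_iff μ hY (measurable_subvec hV _) (measurable_pair hA hV J),
    sig_split A V hJK]

end Blankets

/-- Resampling the coordinates outside `J` from an independent copy preserves a product measure. -/
lemma measurePreserving_mix {I : Type*} [Fintype I] (P : I → Measure ℝ)
    [∀ i, IsProbabilityMeasure (P i)] (J : Set I) [DecidablePred (· ∈ J)] :
    MeasurePreserving (fun p : (I → ℝ) × (I → ℝ) => fun i => if i ∈ J then p.1 i else p.2 i)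
      ((Measure.pi P).prod (Measure.pi P)) (Measure.pi P) := by
  have hm : Measurable
      (fun p : (I → ℝ) × (I → ℝ) => fun i => if i ∈ J then p.1 i else p.2 i) := by
    refine measurable_pi_lambda _ fun i => ?_
    by_cases h : i ∈ J <;> simp only [h, if_true, if_false] <;> fun_prop
  refine ⟨hm, (Measure.pi_eq fun s hs => ?_).symm⟩
  rw [Measure.map_apply hm (MeasurableSet.univ_pi hs)]
  have : (fun p : (I → ℝ) × (I → ℝ) => fun i => if i ∈ J then p.1 i else p.2 i) ⁻¹'
      (Set.univ.pi s) = (Set.univ.pi fun i => if i ∈ J then s i else Set.univ) ×ˢ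
        (Set.univ.pi fun i => if i ∈ J then Set.univ else s i) := by
    ext p
    simp only [Set.mem_preimage, Set.mem_pi, Set.mem_univ, true_implies, Set.mem_prod,
      ← forall_and]
    refine forall_congr' fun i => ?_
    by_cases h : i ∈ J <;> simp [h]
  rw [this, Measure.prod_prod, Measure.pi_pi, Measure.pi_pi, ← Finset.prod_mul_distrib]
  refine Finset.prod_congr rfl fun i _ => ?_
  by_cases h : i ∈ J <;> simp [h]

/-- A function of `(a, v_{J₁})` that agrees with a function of `(a, v_{J₂})` almost everywhere for a
product measure agrees almost everywhere with a function of `(a, v_{J₁ ∩ J₂})`. -/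
lemma exists_factor_inter {I : Type*} [Fintype I] (Q : Measure ℝ) [IsProbabilityMeasure Q]
    (P : I → Measure ℝ) [∀ i, IsProbabilityMeasure (P i)] (J₁ J₂ : Set I)
    (g₁ : ℝ × (J₁ → ℝ) → ℝ) (g₂ : ℝ × (J₂ → ℝ) → ℝ) (hg₂ : Measurable g₂)
    (h : ∀ᵐ p ∂(Q.prod (Measure.pi P)),
      g₁ (p.1, fun j => p.2 j) = g₂ (p.1, fun j => p.2 j)) :
    ∃ g : ℝ × ((J₁ ∩ J₂ : Set I) → ℝ) → ℝ, Measurable g ∧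
      ∀ᵐ p ∂(Q.prod (Measure.pi P)), g₁ (p.1, fun j => p.2 j) = g (p.1, fun j => p.2 j) := by
  classical
  have hT := ((MeasurePreserving.id Q).prod (measurePreserving_mix P J₁)).comp
    ((measurePreserving_prodAssoc Q (Measure.pi P) (Measure.pi P)).comp
      (Measure.measurePreserving_swap (μ := Measure.pi P) (ν := Q.prod (Measure.pi P))))
  have h1 := Measure.ae_ae_of_ae_prod (hT.quasiMeasurePreserving.ae h)
  -- `w` supplies the frozen values of the coordinates outside `J₁`
  obtain ⟨w, hw⟩ := h1.exists
  refine ⟨fun q => g₂ (q.1, fun j => if hj : (j : I) ∈ J₁ then q.2 ⟨j, hj, j.2⟩ else w j),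
    hg₂.comp (measurable_fst.prodMk (measurable_pi_lambda _ fun j => ?_)), ?_⟩
  · by_cases hj : (j : I) ∈ J₁ <;> simp only [hj, dite_true, dite_false] <;> fun_prop
  · filter_upwards [hw] with p hp
    have hp' : g₁ (p.1, fun j : J₁ => if (j : I) ∈ J₁ then p.2 j else w j) =
        g₂ (p.1, fun j : J₂ => if (j : I) ∈ J₁ then p.2 j else w j) := hp
    simpa using hp'

/-- The intersection property, for a single event `{Y ∈ s}`. Only `(A, V)` needs a positive density:
the joint law with `Y` is unrestricted. -/
lemma outBlanket_inter {Ω I : Type*} [MeasurableSpace Ω] [Fintype I]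
    (μ : Measure Ω) [IsProbabilityMeasure μ] {A Y : Ω → ℝ} {V : I → Ω → ℝ}
    (hA : Measurable A) (hV : ∀ i, Measurable (V i))
    (hpos : PositivePairDensity μ A V) {J₁ J₂ K : Set I} (hJ₁ : J₁ ⊆ K)
    {s : Set ℝ} (h₁ : μ⟦Y ⁻¹' s | sig A V K⟧ =ᵐ[μ] μ⟦Y ⁻¹' s | sig A V J₁⟧)
    (h₂ : μ⟦Y ⁻¹' s | sig A V K⟧ =ᵐ[μ] μ⟦Y ⁻¹' s | sig A V J₂⟧) :
    μ⟦Y ⁻¹' s | sig A V K⟧ =ᵐ[μ] μ⟦Y ⁻¹' s | sig A V (J₁ ∩ J₂)⟧ := by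
  have hle : ∀ J, sig A V J ≤ ‹MeasurableSpace Ω› := fun J => (measurable_pair hA hV J).comap_le
  obtain ⟨g₁, hg₁, e₁⟩ := (stronglyMeasurable_condExp (μ := μ) (m := sig A V J₁)
    (f := (Y ⁻¹' s).indicator fun _ => (1 : ℝ))).exists_eq_measurable_comp
  obtain ⟨g₂, hg₂, e₂⟩ := (stronglyMeasurable_condExp (μ := μ) (m := sig A V J₂)
    (f := (Y ⁻¹' s).indicator fun _ => (1 : ℝ))).exists_eq_measurable_comp
  have : IsProbabilityMeasure (μ.map A) := Measure.isProbabilityMeasure_map hA.aemeasurable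
  have : ∀ i, IsProbabilityMeasure (μ.map (V i)) :=
    fun i => Measure.isProbabilityMeasure_map (hV i).aemeasurable
  have hAV : Measurable fun ω => (A ω, fun i => V i ω) :=
    hA.prodMk (measurable_pi_lambda _ hV)
  obtain ⟨hac, hp⟩ := hpos
  have hac' : (μ.map A).prod (Measure.pi fun i => μ.map (V i)) ≪
      μ.map (fun ω => (A ω, fun i => V i ω)) := by
    have := withDensity_absolutelyContinuous'
      (Measure.measurable_rnDeriv (μ.map (fun ω => (A ω, fun i => V i ω)))
        ((μ.map A).prod (Measure.pi fun i => μ.map (V i)))).aemeasurable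
      (hp.mono fun _ hx => hx.ne')
    rwa [Measure.withDensity_rnDeriv_eq _ _ hac] at this
  have h12 : ∀ᵐ p ∂(μ.map (fun ω => (A ω, fun i => V i ω))),
      g₁ (p.1, fun j => p.2 j) = g₂ (p.1, fun j => p.2 j) := by
    refine (ae_map_iff hAV.aemeasurable ?_).2 ?_
    · exact measurableSet_eq_fun (hg₁.measurable.comp (by fun_prop))
        (hg₂.measurable.comp (by fun_prop))
    filter_upwards [h₁, h₂] with ω a b
    rw [a] at b
    rw [e₁, e₂] at b
    exact b
  obtain ⟨g, hg, hge⟩ := exists_factor_inter (μ.map A) (fun i => μ.map (V i)) J₁ J₂ g₁ g₂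
    hg₂.measurable (hac'.ae_le h12)
  have hgω := ae_of_ae_map hAV.aemeasurable (hac.ae_le hge)
  have hmeas : AEStronglyMeasurable[sig A V (J₁ ∩ J₂)] (μ⟦Y ⁻¹' s | sig A V K⟧) μ := by
    refine ⟨fun ω => g (A ω, subvec V (J₁ ∩ J₂) ω), ?_, ?_⟩
    · exact (hg.comp (comap_measurable _)).stronglyMeasurable
    · filter_upwards [h₁, hgω] with ω a b
      rw [a, e₁]
      exact b
  exact (condExp_of_aestronglyMeasurable' (hle _) hmeas integrable_condExp).symm.trans
    (condExp_condExp_of_le (sig_mono A V (Set.inter_subset_left.trans hJ₁)) (hle K))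

/-- Stability, AY version: if `C ⊆ C̃ ⊆ I` with `C = R_{Y|A}(V_{C̃})` and
`R_A(V_C) = C`, then also `R_{Y|A}(V_C) = C`. -/
theorem stability_AY
    {Ω I : Type*} [MeasurableSpace Ω] [StandardBorelSpace Ω] [Fintype I]
    (μ : Measure Ω) [IsProbabilityMeasure μ]
    (A Y : Ω → ℝ) (V : I → Ω → ℝ)
    (hA : Measurable A) (hY : Measurable Y) (hV : ∀ i, Measurable (V i))
    (hpos : PositivePairDensity μ A V)
    (C Ctil : Set I) (hsub : C ⊆ Ctil)
    (hC : C = outBoundary μ A Y V Ctil)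
    (hfixA : treatBoundary μ A V C = C) :
    outBoundary μ A Y V C = C := by
  -- the outcome blankets of `K`, in terms of conditional probabilities
  let B : Set I → Set (Set I) := fun K => {J | J ⊆ K ∧ ∀ s, MeasurableSet s →
    μ⟦Y ⁻¹' s | sig A V K⟧ =ᵐ[μ] μ⟦Y ⁻¹' s | sig A V J⟧}
  have hB : ∀ K, outBoundary μ A Y V K = ⋂₀ B K := by
    intro K
    unfold outBoundary
    congr 1
    ext J
    exact and_congr_right fun hJ => outBlanket_iff μ hA hY hV hJ
  have hself : ∀ K, K ∈ B K := fun K => ⟨subset_rfl, fun _ _ => Filter.EventuallyEq.rfl⟩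
  rw [hB] at hC ⊢
  have hCB : C ∈ B Ctil := by
    obtain ⟨M, hM⟩ := (Set.toFinite (B Ctil)).exists_minimal ⟨_, hself Ctil⟩
    have hMC : M = C := by
      rw [hC]
      refine subset_antisymm (Set.subset_sInter fun J hJ => ?_) (Set.sInter_subset_of_mem hM.1)
      have hMJ : M ∩ J ∈ B Ctil := ⟨Set.inter_subset_left.trans hM.1.1, fun s hs =>
        outBlanket_inter μ hA hV hpos hM.1.1 (hM.1.2 s hs) (hJ.2 s hs)⟩
      exact (hM.2 hMJ Set.inter_subset_left).trans Set.inter_subset_right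
    exact hMC ▸ hM.1
  refine subset_antisymm (Set.sInter_subset_of_mem (hself C)) (Set.subset_sInter fun J hJ => ?_)
  have hJB : J ∈ B Ctil :=
    ⟨hJ.1.trans hsub, fun s hs => (hCB.2 s hs).trans (hJ.2 s hs)⟩
  rw [hC]
  exact Set.sInter_subset_of_mem hJB
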